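/- One has the equality of subsets of Sp(2n,ℂ): ⋃_{t ∈ (−π/4, π/4)ⁿ} Sp(2n,ℝ)·a_t·K_ℂ = ⋃_{s ∈ (−1, 1)ⁿ} Sp(2n,ℝ)·u_s·K_ℂ, where a_t = diag(e^{it₁}, …, e^{it_n}, e^{−it₁}, …, e^{−it_n}) and u_s = [[I_n, i·diag(s₁, …, s_n)], [0, I_n]]. (The left-hand side is the preimage in Sp(2n,ℂ) of the crown domain Ξ of Sp(2n,ℝ)/U(n), so this is the statement Ξ = G·exp(iΛ^{++})·x₀ of the Theorem on the symplectic group.) -/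

import Mathlib

open Matrix

/-- The standard symplectic form matrix `J = [[0, I],[−I, 0]]` (over `ℂ`),
with respect to the index set `Fin n ⊕ Fin n`. -/
noncomputable def Jmat (n : ℕ) : Matrix (Fin n ⊕ Fin n) (Fin n ⊕ Fin n) ℂ :=
  Matrix.fromBlocks 0 1 (-1) 0

/-- The complex symplectic group `Sp(2n,ℂ) = {g : gᵀJg = J}`. -/
noncomputable def SpC (n : ℕ) : Set (Matrix (Fin n ⊕ Fin n) (Fin n ⊕ Fin n) ℂ) :=
  {g | gᵀ * Jmat n * g = Jmat n}

/-- The real symplectic group `Sp(2n,ℝ)`, viewed as the real-entried matrices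
in `Sp(2n,ℂ)`. -/
noncomputable def SpR (n : ℕ) : Set (Matrix (Fin n ⊕ Fin n) (Fin n ⊕ Fin n) ℂ) :=
  {g | g ∈ SpC n ∧ ∀ i j, (g i j).im = 0}

/-- `K_ℂ = {k ∈ Sp(2n,ℂ) : kᵀk = 1}`, the complexified maximal compact subgroup. -/
noncomputable def KC (n : ℕ) : Set (Matrix (Fin n ⊕ Fin n) (Fin n ⊕ Fin n) ℂ) :=
  {k | k ∈ SpC n ∧ kᵀ * k = 1}

/-- `a_t = diag(e^{it₁},…,e^{itₙ},e^{-it₁},…,e^{-itₙ})`. -/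
noncomputable def aMat (n : ℕ) (t : Fin n → ℝ) :
    Matrix (Fin n ⊕ Fin n) (Fin n ⊕ Fin n) ℂ :=
  Matrix.fromBlocks (Matrix.diagonal fun j => Complex.exp (Complex.I * (t j : ℂ))) 0 0
    (Matrix.diagonal fun j => Complex.exp (-(Complex.I * (t j : ℂ))))

/-- `u_s = [[I, i·diag(s₁,…,sₙ)],[0, I]]`. -/
noncomputable def uMat (n : ℕ) (s : Fin n → ℝ) :
    Matrix (Fin n ⊕ Fin n) (Fin n ⊕ Fin n) ℂ :=
  Matrix.fromBlocks 1 (Matrix.diagonal fun j => Complex.I * (s j : ℂ)) 0 1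


/-!
The map `x ↦ x * xᵀ` separates the cosets `x K_ℂ`, so it suffices to find a real symplectic `g`
with `g (a_t a_tᵀ) gᵀ = u_s u_sᵀ`. Since `a_t` and `u_s` mix only the coordinates `j` and `n + j`,
this can be solved separately for each `j`, in `SL(2)`. There, `a_t` and `u_s` send the pair of
points `(i, -i)` of the projective line to `(i e^{2it}, -i e^{2it})` and `(i (1 + s), -i (1 - s))`.
For `s = sin 2t` the real Möbius transformation `z ↦ cos 2t * (z - 1) / (z + 1)` carries the first
pair to the second, and `t ↦ sin 2t` maps `(-π/4, π/4)` onto `(-1, 1)`.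
-/

open DoubleCoset

lemma map_mem_symplecticGroup_iff {ι R S : Type*} [Fintype ι] [DecidableEq ι] [CommRing R]
    [CommRing S] {f : R →+* S} (hf : Function.Injective f) {A : Matrix (ι ⊕ ι) (ι ⊕ ι) R} :
    A.map f ∈ symplecticGroup ι S ↔ A ∈ symplecticGroup ι R := by
  rw [SymplecticGroup.mem_iff, SymplecticGroup.mem_iff, ← map_J ι f, ← transpose_map,
    ← Matrix.map_mul, ← Matrix.map_mul, (map_injective hf).eq_iff]

section OrthogonalCosets

variable {ι R : Type*} [Fintype ι] [DecidableEq ι] [CommRing R]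

lemma mul_mul_transpose_of_mem_orthogonalGroup (x : Matrix ι ι R) {k : Matrix ι ι R}
    (hk : k ∈ orthogonalGroup ι R) : x * k * (x * k)ᵀ = x * xᵀ := by
  rw [transpose_mul, Matrix.mul_assoc, ← Matrix.mul_assoc k, (mem_orthogonalGroup_iff ι R).1 hk,
    Matrix.one_mul]

lemma inv_mul_mem_orthogonalGroup {x y : Matrix ι ι R} (hx : IsUnit x.det)
    (h : y * yᵀ = x * xᵀ) : x⁻¹ * y ∈ orthogonalGroup ι R := by
  rw [mem_orthogonalGroup_iff]
  calc x⁻¹ * y * (x⁻¹ * y)ᵀ = x⁻¹ * (y * yᵀ) * (x⁻¹)ᵀ := by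
        simp only [transpose_mul, Matrix.mul_assoc]
    _ = (x⁻¹ * x) * (x⁻¹ * x)ᵀ := by
        simp only [h, transpose_mul, Matrix.mul_assoc]
    _ = 1 := by rw [nonsing_inv_mul _ hx, transpose_one, Matrix.one_mul]

end OrthogonalCosets

section DiagonalBlocks

variable {ι R S : Type*} [DecidableEq ι] [CommRing R] [CommRing S]

/-- The `2 × 2` block matrix with diagonal blocks assembled from a family `A` of `2 × 2` matrices:
`A j` acts on the coordinates `Sum.inl j` and `Sum.inr j`. It embeds `SL(2, R)^ι` into the
symplectic group. -/
def diagonalBlocks (A : ι → Matrix (Fin 2) (Fin 2) R) : Matrix (ι ⊕ ι) (ι ⊕ ι) R :=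
  fromBlocks (diagonal fun j => A j 0 0) (diagonal fun j => A j 0 1)
    (diagonal fun j => A j 1 0) (diagonal fun j => A j 1 1)

lemma diagonalBlocks_mul [Fintype ι] (A B : ι → Matrix (Fin 2) (Fin 2) R) :
    diagonalBlocks A * diagonalBlocks B = diagonalBlocks fun j => A j * B j := by
  simp [diagonalBlocks, fromBlocks_multiply, Matrix.mul_apply]

lemma diagonalBlocks_transpose (A : ι → Matrix (Fin 2) (Fin 2) R) :
    (diagonalBlocks A)ᵀ = diagonalBlocks fun j => (A j)ᵀ := by
  simp [diagonalBlocks, fromBlocks_transpose]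

lemma diagonalBlocks_map (A : ι → Matrix (Fin 2) (Fin 2) R) (f : R →+* S) :
    (diagonalBlocks A).map f = diagonalBlocks fun j => (A j).map f := by
  simp [diagonalBlocks, fromBlocks_map, diagonal_map]

lemma diagonalBlocks_mem_symplecticGroup_iff [Fintype ι] {A : ι → Matrix (Fin 2) (Fin 2) R} :
    diagonalBlocks A ∈ symplecticGroup ι R ↔ ∀ j, (A j).det = 1 := by
  simp [diagonalBlocks, SymplecticGroup.fromBlocks_mem_iff, det_fin_two, ← diagonal_one,
    diagonal_injective.eq_iff, funext_iff, mul_comm]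

end DiagonalBlocks

section TwoByTwo

/-- The case `n = 1` of `a_t`. -/
noncomputable def torusMatrix (t : ℝ) : Matrix (Fin 2) (Fin 2) ℂ :=
  !![Complex.exp (Complex.I * t), 0; 0, Complex.exp (-(Complex.I * t))]

/-- The case `n = 1` of `u_s`. -/
noncomputable def unipotentMatrix (s : ℝ) : Matrix (Fin 2) (Fin 2) ℂ :=
  !![1, Complex.I * s; 0, 1]

/-- The matrix in `SL(2, ℝ)` of the Möbius transformation `z ↦ c * (z - 1) / (z + 1)`, for `0 < c`.
With `c = cos 2t` it carries the base point moved by `a_t` to the one moved by `u_{sin 2t}`. -/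
noncomputable def moebiusMatrix (c : ℝ) : Matrix (Fin 2) (Fin 2) ℝ :=
  (√(2 * c))⁻¹ • !![c, -c; 1, 1]

lemma det_torusMatrix (t : ℝ) : (torusMatrix t).det = 1 := by
  simp [torusMatrix, ← Complex.exp_add]

lemma det_unipotentMatrix (s : ℝ) : (unipotentMatrix s).det = 1 := by
  simp [unipotentMatrix]

lemma det_moebiusMatrix {c : ℝ} (hc : 0 < c) : (moebiusMatrix c).det = 1 := by
  have hsq : √(2 * c) ^ 2 = 2 * c := Real.sq_sqrt (by positivity)
  rw [moebiusMatrix, det_smul, det_fin_two_of, Fintype.card_fin, inv_pow, hsq]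
  field_simp
  ring

lemma torusMatrix_mul_transpose (t : ℝ) :
    torusMatrix t * (torusMatrix t)ᵀ =
      !![(Real.cos (2 * t) + Real.sin (2 * t) * Complex.I : ℂ), 0;
        0, Real.cos (2 * t) - Real.sin (2 * t) * Complex.I] := by
  push_cast
  rw [Complex.cos_add_sin_I, Complex.cos_sub_sin_I]
  ext i j
  fin_cases i <;> fin_cases j <;>
    simp [torusMatrix, Matrix.mul_apply, ← Complex.exp_add, ← two_mul, mul_comm, mul_assoc]

lemma unipotentMatrix_mul_transpose (s : ℝ) :
    unipotentMatrix s * (unipotentMatrix s)ᵀ =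
      !![1 - (s : ℂ) ^ 2, Complex.I * s; Complex.I * s, 1] := by
  have hsq : Complex.I * s * (Complex.I * s) = -(s : ℂ) ^ 2 := by
    linear_combination (s : ℂ) ^ 2 * Complex.I_sq
  ext i j
  fin_cases i <;> fin_cases j <;>
    simp [unipotentMatrix, Matrix.mul_apply, hsq, sub_eq_add_neg]

lemma moebiusMatrix_mul_mul_transpose {c : ℝ} (hc : 0 < c) (X : Matrix (Fin 2) (Fin 2) ℂ) :
    (moebiusMatrix c).map Complex.ofRealHom * X * ((moebiusMatrix c).map Complex.ofRealHom)ᵀ =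
      (2 * c : ℂ)⁻¹ • (!![(c : ℂ), -c; 1, 1] * X * !![(c : ℂ), 1; -c, 1]) := by
  have hmap : (moebiusMatrix c).map Complex.ofRealHom =
      (√(2 * c) : ℂ)⁻¹ • !![(c : ℂ), -c; 1, 1] := by
    ext i j
    fin_cases i <;> fin_cases j <;> simp [moebiusMatrix]
  have hsq : (√(2 * c) : ℂ)⁻¹ * (√(2 * c) : ℂ)⁻¹ = (2 * c : ℂ)⁻¹ := by
    rw [← mul_inv]
    exact_mod_cast congrArg (·⁻¹) (Real.mul_self_sqrt (by positivity : 0 ≤ 2 * c))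
  have htranspose : !![(c : ℂ), -c; 1, 1]ᵀ = !![(c : ℂ), 1; -c, 1] := by
    simp [← Matrix.ext_iff]
  rw [hmap, transpose_smul, htranspose, Matrix.smul_mul, Matrix.smul_mul, Matrix.mul_smul,
    smul_smul, hsq]

lemma moebiusMatrix_conj_torusMatrix {t : ℝ} (hc : 0 < Real.cos (2 * t)) :
    (moebiusMatrix (Real.cos (2 * t))).map Complex.ofRealHom *
        (torusMatrix t * (torusMatrix t)ᵀ) *
        ((moebiusMatrix (Real.cos (2 * t))).map Complex.ofRealHom)ᵀ =
      unipotentMatrix (Real.sin (2 * t)) * (unipotentMatrix (Real.sin (2 * t)))ᵀ := by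
  rw [moebiusMatrix_mul_mul_transpose hc, torusMatrix_mul_transpose, unipotentMatrix_mul_transpose]
  have hpyth : (Real.sin (2 * t) : ℂ) ^ 2 + (Real.cos (2 * t) : ℂ) ^ 2 = 1 := by
    exact_mod_cast Real.sin_sq_add_cos_sq (2 * t)
  have hc' : (Real.cos (2 * t) : ℂ) ≠ 0 := by exact_mod_cast hc.ne'
  generalize (Real.cos (2 * t) : ℂ) = c at *
  generalize (Real.sin (2 * t) : ℂ) = s at *
  rw [← eq_sub_iff_add_eq'.2 hpyth]
  ext i j
  fin_cases i <;> fin_cases j <;> simp <;> field_simp <;> ring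

end TwoByTwo

section SymplecticDoubleCosets

variable {n : ℕ} {x y g m : Matrix (Fin n ⊕ Fin n) (Fin n ⊕ Fin n) ℂ}

lemma mem_SpC_iff : g ∈ SpC n ↔ g ∈ symplecticGroup (Fin n) ℂ := by
  have hJ : Jmat n = -J (Fin n) ℂ := by simp [Jmat, J, fromBlocks_neg]
  rw [SymplecticGroup.mem_iff', SpC, Set.mem_ofPred_eq, hJ, Matrix.mul_neg, Matrix.neg_mul, neg_inj]

lemma mem_SpR_iff :
    g ∈ SpR n ↔ ∃ h : symplecticGroup (Fin n) ℝ, h.1.map Complex.ofRealHom = g := by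
  constructor
  · rintro ⟨hg, him⟩
    have hmap : (g.map Complex.re).map Complex.ofRealHom = g := by
      ext i j
      exact Complex.ext rfl (him i j).symm
    refine ⟨⟨g.map Complex.re, ?_⟩, hmap⟩
    rwa [← map_mem_symplecticGroup_iff Complex.ofRealHom.injective, hmap, ← mem_SpC_iff]
  · rintro ⟨h, rfl⟩
    exact ⟨mem_SpC_iff.2 (SymplecticGroup.map_mem h.2 _), fun i j => Complex.ofReal_im _⟩

lemma mem_KC_iff :
    g ∈ KC n ↔ g ∈ symplecticGroup (Fin n) ℂ ∧ g ∈ orthogonalGroup (Fin n ⊕ Fin n) ℂ := by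
  rw [KC, Set.mem_ofPred_eq, mem_SpC_iff, mem_orthogonalGroup_iff']

lemma mul_mem_SpR (hx : x ∈ SpR n) (hy : y ∈ SpR n) : x * y ∈ SpR n := by
  obtain ⟨x, rfl⟩ := mem_SpR_iff.1 hx
  obtain ⟨y, rfl⟩ := mem_SpR_iff.1 hy
  exact mem_SpR_iff.2 ⟨x * y, Matrix.map_mul⟩

lemma exists_mul_eq_one_of_mem_SpR (hg : g ∈ SpR n) : ∃ h ∈ SpR n, h * g = 1 := by
  obtain ⟨g, rfl⟩ := mem_SpR_iff.1 hg
  refine ⟨_, mem_SpR_iff.2 ⟨g⁻¹, rfl⟩, ?_⟩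
  rw [← Matrix.map_mul, ← Submonoid.coe_mul, inv_mul_cancel]
  simp

lemma mem_doubleCoset_SpR_KC_iff (hx : x ∈ SpC n) :
    m ∈ doubleCoset x (SpR n) (KC n) ↔
      m ∈ SpC n ∧ ∃ g ∈ SpR n, m * mᵀ = g * (x * xᵀ) * gᵀ := by
  simp only [mem_doubleCoset, mem_KC_iff]
  constructor
  · rintro ⟨g, hg, k, ⟨hkSp, hkO⟩, rfl⟩
    refine ⟨mem_SpC_iff.2 (mul_mem (mul_mem (mem_SpC_iff.1 hg.1) (mem_SpC_iff.1 hx)) hkSp),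
      g, hg, ?_⟩
    rw [mul_mul_transpose_of_mem_orthogonalGroup _ hkO]
    simp only [transpose_mul, Matrix.mul_assoc]
  · rintro ⟨hm, g, hg, hmg⟩
    have hgx : g * x ∈ symplecticGroup (Fin n) ℂ := mul_mem (mem_SpC_iff.1 hg.1) (mem_SpC_iff.1 hx)
    have hdet : IsUnit (g * x).det := SymplecticGroup.symplectic_det hgx
    have hinv : (g * x)⁻¹ ∈ symplecticGroup (Fin n) ℂ := by
      rw [← SymplecticGroup.coe_inv' ⟨_, hgx⟩]
      exact Subtype.property _
    refine ⟨g, hg, (g * x)⁻¹ * m, ⟨mul_mem hinv (mem_SpC_iff.1 hm), ?_⟩,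
      (mul_nonsing_inv_cancel_left _ _ hdet).symm⟩
    apply inv_mul_mem_orthogonalGroup hdet
    rw [hmg]
    simp only [transpose_mul, Matrix.mul_assoc]

lemma doubleCoset_subset_of_mul_transpose_eq (hx : x ∈ SpC n) (hy : y ∈ SpC n) (hg : g ∈ SpR n)
    (h : y * yᵀ = g * (x * xᵀ) * gᵀ) :
    doubleCoset y (SpR n) (KC n) ⊆ doubleCoset x (SpR n) (KC n) := by
  intro m
  rw [mem_doubleCoset_SpR_KC_iff hy, mem_doubleCoset_SpR_KC_iff hx]
  rintro ⟨hm, g', hg', hmg'⟩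
  refine ⟨hm, g' * g, mul_mem_SpR hg' hg, ?_⟩
  rw [hmg', h]
  simp only [transpose_mul, Matrix.mul_assoc]

lemma doubleCoset_eq_of_mul_transpose_eq (hx : x ∈ SpC n) (hy : y ∈ SpC n) (hg : g ∈ SpR n)
    (h : y * yᵀ = g * (x * xᵀ) * gᵀ) :
    doubleCoset y (SpR n) (KC n) = doubleCoset x (SpR n) (KC n) := by
  obtain ⟨g', hg', hinv⟩ := exists_mul_eq_one_of_mem_SpR hg
  refine (doubleCoset_subset_of_mul_transpose_eq hx hy hg h).antisymm
    (doubleCoset_subset_of_mul_transpose_eq hy hx hg' ?_)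
  calc x * xᵀ = (g' * g) * (x * xᵀ) * (g' * g)ᵀ := by
        rw [hinv, transpose_one, Matrix.one_mul, Matrix.mul_one]
    _ = g' * (y * yᵀ) * g'ᵀ := by
        rw [h]
        simp only [transpose_mul, Matrix.mul_assoc]

end SymplecticDoubleCosets

section Crown

variable {n : ℕ}

lemma aMat_eq_diagonalBlocks (t : Fin n → ℝ) :
    aMat n t = diagonalBlocks fun j => torusMatrix (t j) := by
  simp [aMat, diagonalBlocks, torusMatrix]

lemma uMat_eq_diagonalBlocks (s : Fin n → ℝ) :
    uMat n s = diagonalBlocks fun j => unipotentMatrix (s j) := by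
  simp [uMat, diagonalBlocks, unipotentMatrix]

lemma aMat_mem_SpC (t : Fin n → ℝ) : aMat n t ∈ SpC n := by
  rw [mem_SpC_iff, aMat_eq_diagonalBlocks, diagonalBlocks_mem_symplecticGroup_iff]
  exact fun j => det_torusMatrix _

lemma uMat_mem_SpC (s : Fin n → ℝ) : uMat n s ∈ SpC n := by
  rw [mem_SpC_iff, uMat_eq_diagonalBlocks, diagonalBlocks_mem_symplecticGroup_iff]
  exact fun j => det_unipotentMatrix _

lemma doubleCoset_uMat_eq_doubleCoset_aMat {t : Fin n → ℝ} (hc : ∀ j, 0 < Real.cos (2 * t j)) :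
    doubleCoset (uMat n fun j => Real.sin (2 * t j)) (SpR n) (KC n) =
      doubleCoset (aMat n t) (SpR n) (KC n) := by
  let G : Fin n → Matrix (Fin 2) (Fin 2) ℝ := fun j => moebiusMatrix (Real.cos (2 * t j))
  have hG : diagonalBlocks G ∈ symplecticGroup (Fin n) ℝ :=
    diagonalBlocks_mem_symplecticGroup_iff.2 fun j => det_moebiusMatrix (hc j)
  refine doubleCoset_eq_of_mul_transpose_eq (aMat_mem_SpC t) (uMat_mem_SpC _)
    (mem_SpR_iff.2 ⟨⟨_, hG⟩, rfl⟩) ?_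
  simp only [G, aMat_eq_diagonalBlocks, uMat_eq_diagonalBlocks, diagonalBlocks_map,
    diagonalBlocks_transpose, diagonalBlocks_mul, moebiusMatrix_conj_torusMatrix (hc _)]

end Crown

section DoubleAngle

variable {s t : ℝ}

lemma two_mul_mem_Ioo_of_abs_lt_pi_div_four (ht : |t| < Real.pi / 4) :
    2 * t ∈ Set.Ioo (-(Real.pi / 2)) (Real.pi / 2) := by
  rw [abs_lt] at ht
  constructor <;> linarith

lemma abs_sin_two_mul_lt_one (ht : |t| < Real.pi / 4) : |Real.sin (2 * t)| < 1 :=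
  abs_lt.2 (Real.mapsTo_sin_Ioo (two_mul_mem_Ioo_of_abs_lt_pi_div_four ht))

lemma cos_two_mul_pos (ht : |t| < Real.pi / 4) : 0 < Real.cos (2 * t) :=
  Real.cos_pos_of_mem_Ioo (two_mul_mem_Ioo_of_abs_lt_pi_div_four ht)

lemma exists_sin_two_mul_eq (hs : |s| < 1) : ∃ t, |t| < Real.pi / 4 ∧ Real.sin (2 * t) = s := by
  obtain ⟨hs₁, hs₂⟩ := abs_lt.1 hs
  refine ⟨Real.arcsin s / 2, ?_, ?_⟩
  · have hlower := Real.neg_pi_div_two_lt_arcsin.2 hs₁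
    have hupper := Real.arcsin_lt_pi_div_two.2 hs₂
    rw [abs_lt]
    constructor <;> linarith
  · rw [mul_div_cancel₀ _ two_ne_zero, Real.sin_arcsin hs₁.le hs₂.le]

end DoubleAngle

/-- the preimage in `Sp(2n,ℂ)` of the crown domain of
`Sp(2n,ℝ)/U(n)`, i.e. `⋃_{t ∈ (-π/4,π/4)ⁿ} Sp(2n,ℝ)·a_t·K_ℂ`, equals
`⋃_{s ∈ (-1,1)ⁿ} Sp(2n,ℝ)·u_s·K_ℂ`; this is `Ξ = G·exp(iΛ^{++})·x₀`. -/
theorem stmt_15 (n : ℕ) :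
    {m : Matrix (Fin n ⊕ Fin n) (Fin n ⊕ Fin n) ℂ | ∃ t : Fin n → ℝ,
        (∀ j, |t j| < Real.pi / 4) ∧ ∃ g ∈ SpR n, ∃ k ∈ KC n, m = g * aMat n t * k} =
    {m : Matrix (Fin n ⊕ Fin n) (Fin n ⊕ Fin n) ℂ | ∃ s : Fin n → ℝ,
        (∀ j, |s j| < 1) ∧ ∃ g ∈ SpR n, ∃ k ∈ KC n, m = g * uMat n s * k} := by
  ext m
  simp only [Set.mem_ofPred_eq, ← mem_doubleCoset]
  constructor
  · rintro ⟨t, ht, hm⟩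
    refine ⟨fun j => Real.sin (2 * t j), fun j => abs_sin_two_mul_lt_one (ht j), ?_⟩
    rwa [doubleCoset_uMat_eq_doubleCoset_aMat fun j => cos_two_mul_pos (ht j)]
  · rintro ⟨s, hs, hm⟩
    choose t ht hts using fun j => exists_sin_two_mul_eq (hs j)
    obtain rfl : (fun j => Real.sin (2 * t j)) = s := funext hts
    rw [doubleCoset_uMat_eq_doubleCoset_aMat fun j => cos_two_mul_pos (ht j)] at hm
    exact ⟨t, ht, hm⟩
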